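/- For every real number x > 0, the double inequality ln x − 1/x < ψ(x) < ln x − 1/(2x) holds. -/

import Mathlib

/-!
Since `log Γ` is convex and `log Γ(x+1) - log Γ(x) = log x`, comparing the chord over `[x, x+1]`
with the tangents at its endpoints gives the weak bounds `ψ(x) ≤ log x ≤ ψ(x+1)`
(`digamma_le_log`, `log_le_digamma_add_one`).

Both sharp bounds follow from the recurrence `ψ(x+1) = ψ(x) + 1/x`. The gap in the lower bound,
`ψ(x) - log x + 1/x`, is nonnegative by the weak bounds and strictly decreases under `x ↦ x + 1`,
because `log (1 + 1/x) > 1/(x+1)`; hence it is positive. The gap in the upper bound,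
`log x - 1/(2x) - ψ(x)`, also strictly decreases under `x ↦ x + 1`, because
`log (1 + 1/x) < (1/x + 1/(x+1))/2` (this is `s < sinh s` at `s = log (1 + 1/x)`). By `ψ ≤ log` it
is at least `-1/(2(x+n))` at `x + n`, so letting `n → ∞` shows that it is nonnegative, and then
strict decrease makes it positive.
-/

open Real

/-- The digamma function `ψ = Γ′/Γ`. -/
noncomputable def digamma (x : ℝ) : ℝ := deriv Real.Gamma x / Real.Gamma x

lemma hasDerivAt_log_Gamma {x : ℝ} (hx : 0 < x) :
    HasDerivAt (Real.log ∘ Real.Gamma) (digamma x) x := by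
  have hd : DifferentiableAt ℝ Real.Gamma x :=
    Real.differentiableAt_Gamma fun m h => by
      have : (0 : ℝ) ≤ m := m.cast_nonneg
      linarith
  exact hd.hasDerivAt.log (Real.Gamma_pos_of_pos hx).ne'

lemma log_Gamma_add_one {x : ℝ} (hx : 0 < x) :
    (Real.log ∘ Real.Gamma) (x + 1) = Real.log x + (Real.log ∘ Real.Gamma) x := by
  simp only [Function.comp_apply]
  rw [Real.Gamma_add_one hx.ne', Real.log_mul hx.ne' (Real.Gamma_pos_of_pos hx).ne']

lemma digamma_add_one {x : ℝ} (hx : 0 < x) : digamma (x + 1) = digamma x + 1 / x := by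
  have h1 : HasDerivAt (fun y => (Real.log ∘ Real.Gamma) (y + 1)) (digamma (x + 1)) x :=
    (hasDerivAt_log_Gamma (by linarith : 0 < x + 1)).comp_add_const x 1
  have h2 : HasDerivAt (fun y => Real.log y + (Real.log ∘ Real.Gamma) y)
      (x⁻¹ + digamma x) x := (Real.hasDerivAt_log hx.ne').add (hasDerivAt_log_Gamma hx)
  have h3 := h2.congr_of_eventuallyEq
    (Filter.eventuallyEq_of_mem (Ioi_mem_nhds hx) fun y hy => log_Gamma_add_one hy)
  rw [h1.unique h3, one_div, add_comm]

lemma slope_log_Gamma {x : ℝ} (hx : 0 < x) :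
    slope (Real.log ∘ Real.Gamma) x (x + 1) = Real.log x := by
  rw [slope_def_field, log_Gamma_add_one hx]
  simp

lemma digamma_le_log {x : ℝ} (hx : 0 < x) : digamma x ≤ Real.log x := by
  rw [← slope_log_Gamma hx]
  exact Real.convexOn_log_Gamma.le_slope_of_hasDerivAt hx
    (by simp only [Set.mem_Ioi]; linarith) (by linarith) (hasDerivAt_log_Gamma hx)

lemma log_le_digamma_add_one {x : ℝ} (hx : 0 < x) : Real.log x ≤ digamma (x + 1) := by
  rw [← slope_log_Gamma hx]
  exact Real.convexOn_log_Gamma.slope_le_of_hasDerivAt hx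
    (by simp only [Set.mem_Ioi]; linarith) (by linarith) (hasDerivAt_log_Gamma (by linarith))

lemma one_div_lt_log_step {x : ℝ} (hx : 0 < x) :
    1 / (x + 1) < Real.log (x + 1) - Real.log x := by
  have hx1 : 0 < x + 1 := by linarith
  have h := Real.log_lt_sub_one_of_pos (div_pos hx hx1)
    (by rw [Ne, div_eq_one_iff_eq hx1.ne']; linarith)
  rw [Real.log_div hx.ne' hx1.ne'] at h
  have : x / (x + 1) - 1 = -(1 / (x + 1)) := by field_simp; ring
  linarith

/-- The trapezoidal upper bound for `∫ 1/t` over `[x, x+1]`. -/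
lemma log_step_lt_trapezoid {x : ℝ} (hx : 0 < x) :
    Real.log (x + 1) - Real.log x < 1 / (2 * x) + 1 / (2 * (x + 1)) := by
  have hx1 : 0 < x + 1 := by linarith
  have hq : 1 < (x + 1) / x := by rw [one_lt_div hx]; linarith
  -- With `s = log ((x+1)/x)`, the right-hand side is `sinh s`.
  have h := Real.self_lt_sinh_iff.2 (Real.log_pos hq)
  rw [Real.sinh_log (by linarith), Real.log_div hx1.ne' hx.ne'] at h
  have : ((x + 1) / x - ((x + 1) / x)⁻¹) / 2 = 1 / (2 * x) + 1 / (2 * (x + 1)) := by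
    field_simp; ring
  linarith

/-- The gap in the upper bound strictly decreases under `x ↦ x + 1`. -/
lemma upper_gap_step {x : ℝ} (hx : 0 < x) :
    Real.log (x + 1) - 1 / (2 * (x + 1)) - digamma (x + 1) <
      Real.log x - 1 / (2 * x) - digamma x := by
  rw [digamma_add_one hx]
  have h := log_step_lt_trapezoid hx
  have : 1 / x = 1 / (2 * x) + 1 / (2 * x) := by field_simp; norm_num
  linarith

lemma upper_gap_ge (n : ℕ) {x : ℝ} (hx : 0 < x) :
    -(1 / (2 * (x + n))) ≤ Real.log x - 1 / (2 * x) - digamma x := by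
  induction n generalizing x with
  | zero =>
    have := digamma_le_log hx
    simp only [Nat.cast_zero, add_zero]
    linarith
  | succ k ih =>
    have h := ih (by linarith : 0 < x + 1)
    have e : x + ((k + 1 : ℕ) : ℝ) = x + 1 + k := by push_cast; ring
    rw [e]
    linarith [upper_gap_step hx]

lemma upper_gap_nonneg {x : ℝ} (hx : 0 < x) :
    0 ≤ Real.log x - 1 / (2 * x) - digamma x := by
  have ht : Filter.Tendsto (fun n : ℕ => -(1 / (2 * (x + n)))) Filter.atTop (nhds 0) := by
    have h1 : Filter.Tendsto (fun n : ℕ => 2 * (x + (n : ℝ))) Filter.atTop Filter.atTop :=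
      (Filter.tendsto_atTop_add_const_left _ x tendsto_natCast_atTop_atTop).const_mul_atTop
        (by norm_num)
    simpa using h1.inv_tendsto_atTop.neg
  exact le_of_tendsto' ht fun n => upper_gap_ge n hx

theorem stmt_11 (x : ℝ) (hx : 0 < x) :
    Real.log x - 1 / x < digamma x ∧ digamma x < Real.log x - 1 / (2 * x) := by
  have hx1 : 0 < x + 1 := by linarith
  constructor
  · have h1 := log_le_digamma_add_one hx1
    rw [digamma_add_one hx1, digamma_add_one hx] at h1
    linarith [one_div_lt_log_step hx]
  · linarith [upper_gap_step hx, upper_gap_nonneg hx1]
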